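/- Every 8-dimensional 2-step nilpotent Lie algebra g over K (K = ℝ or ℂ) with characteristic sequence (2,2,2,1,1) and with 4 generators (i.e. dim(g/[g,g]) = 4) admits a symplectic form. -/

import Mathlib

/-!
Let `D = ⁅g, g⁆` and let `X` have `rank (ad X) = 3`. An isomorphism `f : D ≃ Dual (g ⧸ D)` with
`f ⁅x, y⁆ z + f ⁅y, z⁆ x + f ⁅z, x⁆ y = 0` extends to a symplectic form, under which `D` and a
complement of `D` are isotropic, so it is enough to construct `f`.

As `⁅X, g⁆` is a hyperplane of `D`, the bracket modulo `⁅X, g⁆` is a scalar alternating form,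
nonzero and with `X` in its radical. On the three-dimensional space `g ⧸ (D + K X)` this form has
a hyperbolic pair `e₂, e₃` and a radical vector `e₁`, and `⁅X, e₁⁆`, `⁅X, e₂⁆`, `⁅X, e₃⁆`,
`⁅e₂, e₃⁆` form a basis of `D`. Let `ε₀, …, ε₃` be the basis of `Dual (g ⧸ D)` dual to `X, e₁,
e₂, e₃`. The map `f` sends `⁅X, -⁆` to a nondegenerate bilinear form on `g ⧸ (D + K X)` whose
antisymmetrization is that alternating form, and `⁅e₂, e₃⁆` to `c ε₁ - ε₀`; the cyclic identity
on `e₁, e₂, e₃` is a linear equation that determines `c`.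
-/

/-- A symplectic form on a Lie algebra `g` over `K`: a `K`-bilinear form which is
alternating, nondegenerate and closed, i.e.
`θ ⁅X,Y⁆ Z + θ ⁅Y,Z⁆ X + θ ⁅Z,X⁆ Y = 0` for all `X Y Z`. -/
def IsSymplecticForm (K : Type*) [RCLike K] (g : Type*) [LieRing g] [LieAlgebra K g]
    (θ : g → g → K) : Prop :=
  (∀ (a : K) (X Y Z : g), θ (a • X + Y) Z = a * θ X Z + θ Y Z) ∧
  (∀ (a : K) (X Y Z : g), θ X (a • Y + Z) = a * θ X Y + θ X Z) ∧
  (∀ X : g, θ X X = 0) ∧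
  (∀ X : g, (∀ Y : g, θ X Y = 0) → X = 0) ∧
  (∀ X Y Z : g, θ ⁅X, Y⁆ Z + θ ⁅Y, Z⁆ X + θ ⁅Z, X⁆ Y = 0)
/-- A Lie algebra is 2-step nilpotent if `[[g,g],g] = 0` and `[g,g] ≠ 0`. -/
def IsTwoStepNilpotent (g : Type*) [LieRing g] : Prop :=
  (∀ X Y Z : g, ⁅⁅X, Y⁆, Z⁆ = 0) ∧ ∃ X Y : g, ⁅X, Y⁆ ≠ 0
/-- A 2-step nilpotent Lie algebra has characteristic sequence `(2,…,2,1,…,1)` with exactly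
`k` twos iff the maximum of `rank (ad X) = dim ⁅X, g⁆` over `X ∈ g \ [g,g]` equals `k`. -/
def HasCharSeqTwos (K : Type*) [RCLike K] (g : Type*) [LieRing g] [LieAlgebra K g]
    (k : ℕ) : Prop :=
  (∀ X : g, X ∉ LieAlgebra.derivedSeries K g 1 →
      Module.finrank K ↥(LinearMap.range (LieAlgebra.ad K g X)) ≤ k) ∧
  ∃ X : g, X ∉ LieAlgebra.derivedSeries K g 1 ∧
      Module.finrank K ↥(LinearMap.range (LieAlgebra.ad K g X)) = k

open Module

section Symplectic

variable {K g : Type*} [Field K] [LieRing g] [LieAlgebra K g]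

/-- A symplectic form on a Lie algebra over an arbitrary field, as a Mathlib bilinear form. Over `ℝ`
or `ℂ` it is the same as `IsSymplecticForm`, which speaks of a function of two variables. -/
structure IsSymplecticBilinForm (ω : LinearMap.BilinForm K g) : Prop where
  isAlt : ω.IsAlt
  nondegenerate : ω.Nondegenerate
  closed : ∀ x y z, ω ⁅x, y⁆ z + ω ⁅y, z⁆ x + ω ⁅z, x⁆ y = 0

theorem IsSymplecticBilinForm.isSymplecticForm {K g : Type*} [RCLike K] [LieRing g]
    [LieAlgebra K g] {ω : LinearMap.BilinForm K g} (hω : IsSymplecticBilinForm ω) :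
    IsSymplecticForm K g fun x y => ω x y :=
  ⟨by simp, by simp, hω.isAlt, hω.nondegenerate.1, hω.closed⟩

variable {D : Submodule K g}

/-- The bracket as an element of a submodule that contains all brackets. -/
def lieCorestrict (hlie : ∀ x y : g, ⁅x, y⁆ ∈ D) (x y : g) : D :=
  ⟨⁅x, y⁆, hlie x y⟩

/-- `f : D → Dual (g ⧸ D)` satisfies the cyclic identity that makes the induced pairing of `D` with
`g ⧸ D` a closed 2-form. -/
def IsClosedPairing (hlie : ∀ x y : g, ⁅x, y⁆ ∈ D) (f : D →ₗ[K] Dual K (g ⧸ D)) : Prop :=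
  ∀ x y z : g, f (lieCorestrict hlie x y) (D.mkQ z) + f (lieCorestrict hlie y z) (D.mkQ x) +
    f (lieCorestrict hlie z x) (D.mkQ y) = 0

theorem IsClosedPairing.exists_isSymplecticBilinForm {hlie : ∀ x y : g, ⁅x, y⁆ ∈ D}
    {f : D ≃ₗ[K] Dual K (g ⧸ D)} (hf : IsClosedPairing hlie f.toLinearMap) :
    ∃ ω : LinearMap.BilinForm K g, IsSymplecticBilinForm ω := by
  obtain ⟨p, hp⟩ := D.subtype.exists_leftInverse_of_injective D.ker_subtype
  have p_apply (d : D) : p d = d := congr($hp d)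
  let F : LinearMap.BilinForm K g := D.mkQ.dualMap ∘ₗ f.toLinearMap ∘ₗ p
  have F_apply (x y : g) : F x y = f (p x) (D.mkQ y) := rfl
  have F_apply_of_mem (x : g) {d : g} (hd : d ∈ D) : F x d = 0 := by
    rw [F_apply, D.mkQ_apply, (Submodule.Quotient.mk_eq_zero D).2 hd, map_zero]
  have hω (x y : g) : (F - F.flip) x y = F x y - F y x := rfl
  have isAlt : (F - F.flip).IsAlt := fun x => by rw [hω, sub_self]
  refine ⟨F - F.flip, isAlt, ?_, fun x y z => ?_⟩
  · refine (LinearMap.IsRefl.nondegenerate_iff_separatingLeft isAlt.isRefl).2 ?_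
    intro x hx
    have hxD : x ∈ D := by
      rw [← Submodule.Quotient.mk_eq_zero, ← Module.forall_dual_apply_eq_zero_iff K]
      intro φ
      simpa [hω, F_apply_of_mem x, F_apply, p_apply] using hx (f.symm φ)
    have hfx : f ⟨x, hxD⟩ = 0 := by
      ext y
      simpa [hω, F_apply_of_mem y hxD, F_apply, p_apply ⟨x, hxD⟩] using hx y
    simpa using hfx
  · have hbracket (x y z : g) :
        (F - F.flip) ⁅x, y⁆ z = f (lieCorestrict hlie x y) (D.mkQ z) := by
      rw [hω, F_apply_of_mem z (hlie x y), sub_zero, F_apply]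
      exact congr(f $(p_apply (lieCorestrict hlie x y)) (D.mkQ z))
    rw [hbracket, hbracket, hbracket]
    exact hf x y z

end Symplectic

section LinearAlgebra

variable {K V W W' : Type*} [Field K] [AddCommGroup V] [Module K V] [AddCommGroup W] [Module K W]
  [AddCommGroup W'] [Module K W']

theorem exists_dual_eq_zero_iff_mem [FiniteDimensional K V] {R D : Submodule K V} (hRD : R ≤ D)
    (hfinrank : finrank K D = finrank K R + 1) :
    ∃ l : Dual K V, ∀ d ∈ D, l d = 0 ↔ d ∈ R := by
  obtain ⟨d₀, hd₀, hd₀R⟩ : ∃ d ∈ D, d ∉ R :=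
    SetLike.exists_of_lt (hRD.lt_of_ne (by rintro rfl; omega))
  obtain ⟨l, hl, hRl⟩ := Submodule.exists_le_ker_of_notMem hd₀R
  have hlt : D ⊓ LinearMap.ker l < D := inf_le_left.lt_of_ne fun h => hl (inf_eq_left.1 h hd₀)
  have hR : R = D ⊓ LinearMap.ker l := Submodule.eq_of_le_of_finrank_le (le_inf hRD hRl) (by
    have := Submodule.finrank_lt_finrank_of_lt hlt
    omega)
  exact ⟨l, fun d hd => by rw [hR, Submodule.mem_inf, LinearMap.mem_ker, and_iff_right hd]⟩

theorem exists_apply_eq_zero_and_ne_zero_of_finrank_range_lt [FiniteDimensional K V]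
    {f : V →ₗ[K] W} {h : V →ₗ[K] W'}
    (hlt : finrank K (LinearMap.range f) < finrank K (LinearMap.range h)) :
    ∃ v, f v = 0 ∧ h v ≠ 0 := by
  suffices ¬LinearMap.ker f ≤ LinearMap.ker h from SetLike.not_le_iff_exists.1 this
  intro hle
  have := Submodule.finrank_mono hle
  have := f.finrank_range_add_finrank_ker
  have := h.finrank_range_add_finrank_ker
  omega

theorem exists_linearEquiv_apply_eq {ι : Type*} [Fintype ι] [Nonempty ι]
    {a : ι → V} {b : ι → W} (ha : LinearIndependent K a) (hb : LinearIndependent K b)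
    (hV : Fintype.card ι = finrank K V) (hW : Fintype.card ι = finrank K W) :
    ∃ f : V ≃ₗ[K] W, ∀ i, f (a i) = b i := by
  refine ⟨(basisOfLinearIndependentOfCardEqFinrank ha hV).equiv
    (basisOfLinearIndependentOfCardEqFinrank hb hW) (Equiv.refl ι), fun i => ?_⟩
  simpa using (basisOfLinearIndependentOfCardEqFinrank ha hV).equiv_apply i
    (basisOfLinearIndependentOfCardEqFinrank hb hW) (Equiv.refl ι)

end LinearAlgebra

section Bracket

variable {K g : Type*} [Field K] [LieRing g] [LieAlgebra K g] {D : Submodule K g}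

theorem exists_lie_notMem {R : Submodule K g}
    (hR : ¬(LieAlgebra.derivedSeries K g 1 : Submodule K g) ≤ R) : ∃ x y : g, ⁅x, y⁆ ∉ R := by
  contrapose! hR
  rw [LieAlgebra.coe_derivedSeries_one_eq, Submodule.span_le]
  rintro _ ⟨x, y, rfl⟩
  exact hR x y

theorem lie_mem_derivedSeries_one (x y : g) :
    ⁅x, y⁆ ∈ (LieAlgebra.derivedSeries K g 1 : Submodule K g) := by
  rw [LieAlgebra.coe_derivedSeries_one_eq]
  exact Submodule.subset_span ⟨x, y, rfl⟩

theorem lie_eq_zero_of_mem_derivedSeries_one (hnil : ∀ x y z : g, ⁅⁅x, y⁆, z⁆ = 0) (x : g) :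
    ∀ d ∈ (LieAlgebra.derivedSeries K g 1 : Submodule K g), ⁅x, d⁆ = 0 := by
  suffices (LieAlgebra.derivedSeries K g 1 : Submodule K g) ≤ LinearMap.ker (LieAlgebra.ad K g x)
    from this
  rw [LieAlgebra.coe_derivedSeries_one_eq, Submodule.span_le]
  rintro _ ⟨y, z, rfl⟩
  rw [SetLike.mem_coe, LinearMap.mem_ker, LieAlgebra.ad_apply, ← lie_skew, hnil, neg_zero]

theorem lie_eq_sum_repr_smul_lie {ι : Type*} [Fintype ι] (hcen : ∀ x : g, ∀ d ∈ D, ⁅x, d⁆ = 0)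
    {v : Basis ι K (g ⧸ D)} {e : ι → g} (hv : ∀ i, v i = D.mkQ (e i)) (x y : g) :
    ⁅x, y⁆ = ∑ i, v.repr (D.mkQ y) i • ⁅x, e i⁆ := by
  have hy : y - ∑ i, v.repr (D.mkQ y) i • e i ∈ D := by
    rw [← Submodule.Quotient.mk_eq_zero, ← D.mkQ_apply, map_sub, map_sum]
    simp only [map_smul, ← hv, v.sum_repr, sub_self]
  simpa only [lie_sub, lie_sum, lie_smul, sub_eq_zero] using hcen x _ hy

theorem ker_ad_eq_sup_span_singleton [FiniteDimensional K g] {X : g} (hX : X ∉ D)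
    (hcen : ∀ d ∈ D, ⁅X, d⁆ = 0)
    (hrank : finrank K (g ⧸ D) = finrank K (LinearMap.range (LieAlgebra.ad K g X)) + 1) :
    LinearMap.ker (LieAlgebra.ad K g X) = D ⊔ K ∙ X := by
  have hle : D ⊔ K ∙ X ≤ LinearMap.ker (LieAlgebra.ad K g X) :=
    sup_le hcen (by simp [Submodule.span_singleton_le_iff_mem])
  have hlt : D < D ⊔ K ∙ X := left_lt_sup.2 (by rwa [Submodule.span_singleton_le_iff_mem])
  refine (Submodule.eq_of_le_of_finrank_le hle ?_).symm
  have := Submodule.finrank_lt_finrank_of_lt hlt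
  have := D.finrank_quotient_add_finrank
  have := (LieAlgebra.ad K g X).finrank_range_add_finrank_ker
  omega

theorem lie_mem_range_ad_of_lie_eq_zero [FiniteDimensional K g] {X : g} (hX : X ∉ D)
    (hcen : ∀ x : g, ∀ d ∈ D, ⁅x, d⁆ = 0)
    (hrank : finrank K (g ⧸ D) = finrank K (LinearMap.range (LieAlgebra.ad K g X)) + 1)
    {m : g} (hm : ⁅X, m⁆ = 0) (y : g) : ⁅y, m⁆ ∈ LinearMap.range (LieAlgebra.ad K g X) := by
  have hmem : m ∈ LinearMap.ker (LieAlgebra.ad K g X) := hm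
  rw [ker_ad_eq_sup_span_singleton hX (hcen X) hrank, Submodule.mem_sup] at hmem
  obtain ⟨d, hd, _, hz, rfl⟩ := hmem
  obtain ⟨a, rfl⟩ := Submodule.mem_span_singleton.1 hz
  exact ⟨-a • y, by
    rw [lie_add, hcen y d hd, zero_add, LieAlgebra.ad_apply, lie_smul, lie_smul, ← lie_skew X y,
      smul_neg, neg_smul, neg_neg]⟩

end Bracket

section AdaptedFrame

variable {K g : Type*} [Field K] [LieRing g] [LieAlgebra K g] {D : Submodule K g}

variable (K) in
/-- Four vectors adapted to the scalar alternating form `⁅-, -⁆` modulo `⁅e₀, g⁆`: for this form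
`e₂, e₃` is a hyperbolic pair (up to scaling) and `e₁` is orthogonal to it. -/
structure IsAdaptedFrame (e : Fin 4 → g) : Prop where
  linearIndependent_lie : LinearIndependent K ![⁅e 0, e 1⁆, ⁅e 0, e 2⁆, ⁅e 0, e 3⁆, ⁅e 2, e 3⁆]
  lie_one_two_mem : ⁅e 1, e 2⁆ ∈ LinearMap.range (LieAlgebra.ad K g (e 0))
  lie_one_three_mem : ⁅e 1, e 3⁆ ∈ LinearMap.range (LieAlgebra.ad K g (e 0))

theorem linearIndependent_lie_of_notMem_range_ad {X e₁ e₂ e₃ : g}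
    (hX : ∀ m, ⁅X, m⁆ = 0 → ∀ y : g, ⁅y, m⁆ ∈ LinearMap.range (LieAlgebra.ad K g X))
    (h1 : ⁅X, e₁⁆ ≠ 0) (h12 : ⁅e₁, e₂⁆ ∈ LinearMap.range (LieAlgebra.ad K g X))
    (h13 : ⁅e₁, e₃⁆ ∈ LinearMap.range (LieAlgebra.ad K g X))
    (h23 : ⁅e₂, e₃⁆ ∉ LinearMap.range (LieAlgebra.ad K g X)) :
    LinearIndependent K ![⁅X, e₁⁆, ⁅X, e₂⁆, ⁅X, e₃⁆, ⁅e₂, e₃⁆] := by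
  set R := LinearMap.range (LieAlgebra.ad K g X)
  have eq_zero_of_smul_mem {a : K} (ha : a • ⁅e₂, e₃⁆ ∈ R) : a = 0 := by
    by_contra hne
    exact h23 ((R.smul_mem_iff hne).1 ha)
  have h21 : ⁅e₂, e₁⁆ ∈ R := by rw [← lie_skew]; exact R.neg_mem h12
  have h31 : ⁅e₃, e₁⁆ ∈ R := by rw [← lie_skew]; exact R.neg_mem h13
  rw [Fintype.linearIndependent_iff]
  intro c hc
  simp only [Fin.sum_univ_four, Matrix.cons_val] at hc
  have c3 : c 3 = 0 := eq_zero_of_smul_mem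
    ⟨-(c 0 • e₁ + c 1 • e₂ + c 2 • e₃), by
      rw [LieAlgebra.ad_apply, lie_neg, neg_eq_iff_add_eq_zero, ← hc]
      simp only [lie_add, lie_smul]⟩
  have hker : ⁅X, c 0 • e₁ + c 1 • e₂ + c 2 • e₃⁆ = 0 := by simpa [c3] using hc
  have c2 : c 2 = 0 := eq_zero_of_smul_mem <| by
    have := hX _ hker e₂
    rw [lie_add, lie_add, lie_smul, lie_smul, lie_smul, lie_self, smul_zero, add_zero] at this
    exact (R.add_mem_iff_right (R.smul_mem _ h21)).1 this
  have c1 : c 1 = 0 := eq_zero_of_smul_mem <| by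
    have := hX _ hker e₃
    rw [c2, zero_smul, add_zero, lie_add, lie_smul, lie_smul, ← lie_skew e₃ e₂, smul_neg] at this
    exact R.neg_mem_iff.1 ((R.add_mem_iff_right (R.smul_mem _ h31)).1 this)
  have c0 : c 0 = 0 := by simpa [c1, c2, h1] using hker
  intro i
  fin_cases i <;> assumption

theorem exists_isAdaptedFrame [FiniteDimensional K g] {X : g}
    (hnil : ∀ x y z : g, ⁅⁅x, y⁆, z⁆ = 0)
    (hD : finrank K (LieAlgebra.derivedSeries K g 1 : Submodule K g) =
      finrank K (LinearMap.range (LieAlgebra.ad K g X)) + 1)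
    (hgen : finrank K (g ⧸ (LieAlgebra.derivedSeries K g 1 : Submodule K g)) =
      finrank K (LinearMap.range (LieAlgebra.ad K g X)) + 1)
    (hX : 2 < finrank K (LinearMap.range (LieAlgebra.ad K g X))) :
    ∃ e : Fin 4 → g, IsAdaptedFrame K e := by
  set D := (LieAlgebra.derivedSeries K g 1 : Submodule K g)
  set R := LinearMap.range (LieAlgebra.ad K g X) with R_def
  have hlie : ∀ x y : g, ⁅x, y⁆ ∈ D := lie_mem_derivedSeries_one
  have hcen : ∀ x : g, ∀ d ∈ D, ⁅x, d⁆ = 0 := lie_eq_zero_of_mem_derivedSeries_one hnil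
  have hRD : R ≤ D := by
    rintro _ ⟨y, rfl⟩
    exact hlie X y
  have hXD : X ∉ D := fun hXD => by
    have : LieAlgebra.ad K g X = 0 := by
      ext y
      rw [LieAlgebra.ad_apply, ← lie_skew, hcen y X hXD, neg_zero, LinearMap.zero_apply]
    rw [R_def, this, LinearMap.range_zero, finrank_bot] at hX
    omega
  obtain ⟨l, hl⟩ := exists_dual_eq_zero_iff_mem hRD hD
  obtain ⟨e₂, e₃, h23⟩ := exists_lie_notMem fun hDR : D ≤ R => by
    have := Submodule.finrank_mono hDR
    omega
  obtain ⟨e₁, h1, hX1⟩ := exists_apply_eq_zero_and_ne_zero_of_finrank_range_lt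
    (f := (l ∘ₗ LieAlgebra.ad K g e₂).prod (l ∘ₗ LieAlgebra.ad K g e₃)) (h := LieAlgebra.ad K g X)
    (lt_of_le_of_lt (Submodule.finrank_le _) (by simpa using hX))
  have mem_range_of_apply_lie_eq_zero {x : g} (hx : l ⁅x, e₁⁆ = 0) : ⁅e₁, x⁆ ∈ R := by
    rw [← lie_skew]
    exact R.neg_mem ((hl _ (hlie x e₁)).1 hx)
  obtain ⟨h12, h13⟩ : l ⁅e₂, e₁⁆ = 0 ∧ l ⁅e₃, e₁⁆ = 0 := Prod.mk.inj h1
  have hker : ∀ m, ⁅X, m⁆ = 0 → ∀ y : g, ⁅y, m⁆ ∈ R := fun m =>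
    lie_mem_range_ad_of_lie_eq_zero hXD hcen hgen
  exact ⟨![X, e₁, e₂, e₃],
    linearIndependent_lie_of_notMem_range_ad hker hX1 (mem_range_of_apply_lie_eq_zero h12)
      (mem_range_of_apply_lie_eq_zero h13) h23,
    mem_range_of_apply_lie_eq_zero h12, mem_range_of_apply_lie_eq_zero h13⟩

theorem IsAdaptedFrame.linearIndependent_mkQ {e : Fin 4 → g} (he : IsAdaptedFrame K e)
    (hcen : ∀ x : g, ∀ d ∈ D, ⁅x, d⁆ = 0) : LinearIndependent K (D.mkQ ∘ e) := by
  rw [Fintype.linearIndependent_iff]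
  intro c hc
  have hmem : ∑ i, c i • e i ∈ D := by
    rw [← Submodule.Quotient.mk_eq_zero, ← D.mkQ_apply, map_sum]
    simpa using hc
  have h0 : c 1 • ⁅e 0, e 1⁆ + c 2 • ⁅e 0, e 2⁆ + c 3 • ⁅e 0, e 3⁆ = 0 := by
    simpa [Fin.sum_univ_four] using hcen (e 0) _ hmem
  have hc123 := Fintype.linearIndependent_iff.1 he.linearIndependent_lie ![c 1, c 2, c 3, 0]
    (by simpa [Fin.sum_univ_four] using h0)
  have c1 : c 1 = 0 := hc123 0
  have c2 : c 2 = 0 := hc123 1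
  have c3 : c 3 = 0 := hc123 2
  have h10 : ⁅e 1, e 0⁆ ≠ 0 := by
    rw [← lie_skew, neg_ne_zero]
    exact he.linearIndependent_lie.ne_zero 0
  have c0 : c 0 = 0 := by
    simpa [Fin.sum_univ_four, c1, c2, c3, h10] using hcen (e 1) _ hmem
  intro i
  fin_cases i <;> assumption

/-- The Plücker coordinates of a pair of vectors. -/
def plucker {ι : Type*} (a b : ι → K) (i j : ι) : K :=
  a i * b j - a j * b i

theorem lie_eq_plucker_smul_lie (hcen : ∀ x : g, ∀ d ∈ D, ⁅x, d⁆ = 0) {v : Basis (Fin 4) K (g ⧸ D)}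
    {e : Fin 4 → g} (hv : ∀ i, v i = D.mkQ (e i)) (x y : g) :
    letI m := plucker (v.repr (D.mkQ x)) (v.repr (D.mkQ y))
    ⁅x, y⁆ = m 0 1 • ⁅e 0, e 1⁆ + m 0 2 • ⁅e 0, e 2⁆ + m 0 3 • ⁅e 0, e 3⁆ + m 1 2 • ⁅e 1, e 2⁆ +
      m 1 3 • ⁅e 1, e 3⁆ + m 2 3 • ⁅e 2, e 3⁆ := by
  have hx (i : Fin 4) : ⁅x, e i⁆ = -∑ j, v.repr (D.mkQ x) j • ⁅e i, e j⁆ := by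
    rw [← lie_skew, lie_eq_sum_repr_smul_lie hcen hv (e i) x]
  have hskew (i j : Fin 4) : ⁅e j, e i⁆ = -⁅e i, e j⁆ := (lie_skew _ _).symm
  rw [lie_eq_sum_repr_smul_lie hcen hv x y]
  simp only [hx, Fin.sum_univ_four, lie_self, hskew 0 1, hskew 0 2, hskew 0 3, hskew 1 2, hskew 1 3,
    hskew 2 3, plucker]
  module

/-- The first three functionals are the rows of `ε₁ ⊗ ε₁ + ε₂ ⊗ (ε₂ + ε₃) + ε₃ ⊗ ε₃`, a form with
antisymmetrization `ε₂ ∧ ε₃` that is nondegenerate in every characteristic. -/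
theorem linearIndependent_twisted_coord {V : Type*} [AddCommGroup V] [Module K V]
    (v : Basis (Fin 4) K V) (c : K) :
    LinearIndependent K
      ![v.coord 1, v.coord 2 + v.coord 3, v.coord 3, c • v.coord 1 - v.coord 0] := by
  rw [Fintype.linearIndependent_iff]
  intro a ha
  have apply_basis (i : Fin 4) := congr($ha (v i))
  simp only [Fin.sum_univ_four, Matrix.cons_val] at apply_basis
  have a3 : a 3 = 0 := by simpa using apply_basis 0
  have a0 : a 0 = 0 := by simpa [a3] using apply_basis 1
  have a1 : a 1 = 0 := by simpa using apply_basis 2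
  have a2 : a 2 = 0 := by simpa [a1] using apply_basis 3
  intro i
  fin_cases i <;> assumption

theorem IsAdaptedFrame.exists_linearEquiv_dual {e : Fin 4 → g} (he : IsAdaptedFrame K e)
    (hlie : ∀ x y : g, ⁅x, y⁆ ∈ D) (hD : finrank K D = 4) (v : Basis (Fin 4) K (g ⧸ D)) (c : K) :
    ∃ f : D ≃ₗ[K] Dual K (g ⧸ D),
      f (lieCorestrict hlie (e 0) (e 1)) = v.coord 1 ∧
      f (lieCorestrict hlie (e 0) (e 2)) = v.coord 2 + v.coord 3 ∧
      f (lieCorestrict hlie (e 0) (e 3)) = v.coord 3 ∧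
      f (lieCorestrict hlie (e 2) (e 3)) = c • v.coord 1 - v.coord 0 := by
  have hbasis : LinearIndependent K ![lieCorestrict hlie (e 0) (e 1),
      lieCorestrict hlie (e 0) (e 2), lieCorestrict hlie (e 0) (e 3),
      lieCorestrict hlie (e 2) (e 3)] := by
    refine LinearIndependent.of_comp D.subtype ?_
    convert he.linearIndependent_lie using 1
    ext i
    fin_cases i <;> rfl
  obtain ⟨f, hf⟩ := exists_linearEquiv_apply_eq hbasis (linearIndependent_twisted_coord v c)
    (by rw [Fintype.card_fin, hD])
    (by rw [Subspace.dual_finrank_eq, finrank_eq_card_basis v])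
  exact ⟨f, hf 0, hf 1, hf 2, hf 3⟩

theorem isClosedPairing_of_twisted_coord {hlie : ∀ x y : g, ⁅x, y⁆ ∈ D}
    (hcen : ∀ x : g, ∀ d ∈ D, ⁅x, d⁆ = 0) {v : Basis (Fin 4) K (g ⧸ D)} {e : Fin 4 → g}
    (hv : ∀ i, v i = D.mkQ (e i)) {u w : g} (hu : ⁅e 0, u⁆ = ⁅e 1, e 2⁆)
    (hw : ⁅e 0, w⁆ = ⁅e 1, e 3⁆) {f : D →ₗ[K] Dual K (g ⧸ D)}
    (f01 : f (lieCorestrict hlie (e 0) (e 1)) = v.coord 1)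
    (f02 : f (lieCorestrict hlie (e 0) (e 2)) = v.coord 2 + v.coord 3)
    (f03 : f (lieCorestrict hlie (e 0) (e 3)) = v.coord 3)
    (f23 : f (lieCorestrict hlie (e 2) (e 3)) =
      (v.coord 2 (D.mkQ w) - v.coord 2 (D.mkQ u) - v.coord 3 (D.mkQ u)) • v.coord 1 -
        v.coord 0) :
    IsClosedPairing hlie f := by
  have f0 (y : g) : f (lieCorestrict hlie (e 0) y) =
      v.coord 1 (D.mkQ y) • f (lieCorestrict hlie (e 0) (e 1)) +
        v.coord 2 (D.mkQ y) • f (lieCorestrict hlie (e 0) (e 2)) +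
        v.coord 3 (D.mkQ y) • f (lieCorestrict hlie (e 0) (e 3)) := by
    simp only [← map_smul, ← map_add]
    refine congrArg f (Subtype.ext ?_)
    simpa [Fin.sum_univ_four, lieCorestrict] using lie_eq_sum_repr_smul_lie hcen hv (e 0) y
  simp only [f01, f02, f03] at f0
  have f12 : f (lieCorestrict hlie (e 1) (e 2)) = _ :=
    (congrArg f (Subtype.ext hu.symm)).trans (f0 u)
  have f13 : f (lieCorestrict hlie (e 1) (e 3)) = _ :=
    (congrArg f (Subtype.ext hw.symm)).trans (f0 w)
  have f_lie (x y : g) :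
      letI m := plucker (v.repr (D.mkQ x)) (v.repr (D.mkQ y))
      f (lieCorestrict hlie x y) =
        m 0 1 • f (lieCorestrict hlie (e 0) (e 1)) + m 0 2 • f (lieCorestrict hlie (e 0) (e 2)) +
        m 0 3 • f (lieCorestrict hlie (e 0) (e 3)) + m 1 2 • f (lieCorestrict hlie (e 1) (e 2)) +
        m 1 3 • f (lieCorestrict hlie (e 1) (e 3)) +
        m 2 3 • f (lieCorestrict hlie (e 2) (e 3)) := by
    simp only [← map_smul, ← map_add]
    exact congrArg f (Subtype.ext (lie_eq_plucker_smul_lie hcen hv x y))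
  simp only [f01, f02, f03, f12, f13, f23] at f_lie
  intro x y z
  rw [f_lie x y, f_lie y z, f_lie z x]
  simp only [plucker, LinearMap.add_apply, LinearMap.sub_apply, LinearMap.smul_apply,
    Basis.coord_apply, smul_eq_mul]
  ring

theorem IsAdaptedFrame.exists_isClosedPairing {e : Fin 4 → g} (he : IsAdaptedFrame K e)
    (hlie : ∀ x y : g, ⁅x, y⁆ ∈ D) (hcen : ∀ x : g, ∀ d ∈ D, ⁅x, d⁆ = 0)
    (hD : finrank K D = 4) (hgen : finrank K (g ⧸ D) = 4) :
    ∃ f : D ≃ₗ[K] Dual K (g ⧸ D), IsClosedPairing hlie f.toLinearMap := by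
  let v := basisOfLinearIndependentOfCardEqFinrank (he.linearIndependent_mkQ hcen)
    (by rw [Fintype.card_fin, hgen])
  have hv (i : Fin 4) : v i = D.mkQ (e i) := by simp [v]
  obtain ⟨u, hu⟩ := he.lie_one_two_mem
  obtain ⟨w, hw⟩ := he.lie_one_three_mem
  obtain ⟨f, f01, f02, f03, f23⟩ := he.exists_linearEquiv_dual hlie hD v
    (v.coord 2 (D.mkQ w) - v.coord 2 (D.mkQ u) - v.coord 3 (D.mkQ u))
  exact ⟨f, isClosedPairing_of_twisted_coord hcen hv hu hw f01 f02 f03 f23⟩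

end AdaptedFrame

theorem symplectic_of_eightDim_charSeq32_fourGenerators_general {K g : Type*} [Field K] [LieRing g]
    [LieAlgebra K g] (hnil : ∀ x y z : g, ⁅⁅x, y⁆, z⁆ = 0) (h8 : finrank K g = 8)
    (hgen : finrank K (g ⧸ (LieAlgebra.derivedSeries K g 1 : Submodule K g)) = 4)
    {X : g} (hX : finrank K (LinearMap.range (LieAlgebra.ad K g X)) = 3) :
    ∃ ω : LinearMap.BilinForm K g, IsSymplecticBilinForm ω := by
  have : FiniteDimensional K g := Module.finite_of_finrank_pos (by omega)
  have hD : finrank K (LieAlgebra.derivedSeries K g 1 : Submodule K g) = 4 := by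
    have := (LieAlgebra.derivedSeries K g 1 : Submodule K g).finrank_quotient_add_finrank
    omega
  obtain ⟨e, he⟩ := exists_isAdaptedFrame hnil (by rw [hD, hX]) (by rw [hgen, hX])
    (by rw [hX]; norm_num)
  obtain ⟨f, hf⟩ := he.exists_isClosedPairing lie_mem_derivedSeries_one
    (lie_eq_zero_of_mem_derivedSeries_one hnil) hD hgen
  exact hf.exists_isSymplecticBilinForm

/-- Every 8-dimensional 2-step nilpotent Lie algebra over `K` with characteristic sequence
`(2,2,2,1,1)` and with 4 generators (i.e. `dim (g/[g,g]) = 4`) admits a symplectic form. -/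
theorem symplectic_of_eightDim_charSeq32_fourGenerators
    (K : Type*) [RCLike K] (g : Type*) [LieRing g] [LieAlgebra K g] [FiniteDimensional K g]
    (h2 : IsTwoStepNilpotent g) (h8 : Module.finrank K g = 8)
    (hc : HasCharSeqTwos K g 3)
    (hgen : Module.finrank K (g ⧸ (LieAlgebra.derivedSeries K g 1 : Submodule K g)) = 4) :
    ∃ θ : g → g → K, IsSymplecticForm K g θ := by
  obtain ⟨-, X, -, hX⟩ := hc
  obtain ⟨ω, hω⟩ := symplectic_of_eightDim_charSeq32_fourGenerators_general h2.1 h8 hgen hX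
  exact ⟨_, hω.isSymplecticForm⟩
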